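/- Let f ∈ L¹(𝕋^d) have mean zero and suppose that ∫ f·φ dx = 0 for every smooth divergence-free mean-zero vector field φ on 𝕋^d. Then f = ∇p for some function p ∈ W^{1,1}(𝕋^d). -/

import Mathlib

open MeasureTheory
open scoped BigOperators InnerProductSpace

noncomputable section

/-- `2π`-periodicity in every coordinate direction (functions on `ℝ^d` model fields on the
flat torus `𝕋^d = [-π,π]^d`). -/
def Periodic2pi {d : ℕ} {E : Type*} (f : (Fin d → ℝ) → E) : Prop :=
  ∀ (x : Fin d → ℝ) (i : Fin d), f (x + Pi.single i (2 * Real.pi)) = f x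

/-- the fundamental domain `[-π,π]^d`. -/
def box (d : ℕ) : Set (Fin d → ℝ) := Set.univ.pi fun _ => Set.Icc (-Real.pi) Real.pi

/-- partial derivative `∂_i`. -/
def pd {d : ℕ} {E : Type*} [NormedAddCommGroup E] [NormedSpace ℝ E]
    (i : Fin d) (f : (Fin d → ℝ) → E) (x : Fin d → ℝ) : E :=
  fderiv ℝ f x (Pi.single i 1)

/-!
Let `p(x)` be the average over `y` of the line integral of `f` along the segment from `x - y` to
`x`. By Fubini's theorem and translation invariance, `∫ p χ = ∫ ⟪f, Tχ⟫` for the field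
`Tχ(x) = ⨍_y ∫_0^1 χ(x + t y) y dt dy`, and the fundamental theorem of calculus along segments gives
`div Tχ = ⨍ χ - χ`. Hence `ψ eᵢ + T(∂ᵢψ)` is divergence-free for every test function `ψ`. Constants
are orthogonal to `f`, so this field is too, whatever its mean: `∫ fᵢ ψ + ∫ p ∂ᵢψ = 0`.
-/

section FundamentalDomain

open scoped Pointwise

theorem isAddFundamentalDomain_congr_ae {G α : Type*} [AddGroup G] [AddAction G α] [Countable G]
    [MeasurableSpace α] [MeasurableConstVAdd G α] {μ : Measure α} [VAddInvariantMeasure G α μ]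
    {s t : Set α} (hs : IsAddFundamentalDomain G s μ) (hst : s =ᵐ[μ] t) :
    IsAddFundamentalDomain G t μ where
  nullMeasurableSet := hs.nullMeasurableSet.congr hst
  ae_covers := by
    have hmem : ∀ᵐ x ∂μ, ∀ g : G, g +ᵥ x ∈ s ↔ g +ᵥ x ∈ t := ae_all_iff.2 fun g =>
      ((measurePreserving_vadd g μ).quasiMeasurePreserving.tendsto_ae.eventually hst).mono
        fun _ => Iff.of_eq
    filter_upwards [hs.ae_covers, hmem] with x ⟨g, hg⟩ hx using ⟨g, (hx g).1 hg⟩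
  aedisjoint := fun g h hgh =>
    (hs.aedisjoint hgh).congr ((vadd_set_ae_eq g).2 hst).symm ((vadd_set_ae_eq h).2 hst).symm

variable {d : ℕ}

/-- The basis `2π eᵢ` of the period lattice of `𝕋^d`. -/
def periodBasis (d : ℕ) : Module.Basis (Fin d) ℝ (Fin d → ℝ) :=
  (Pi.basisFun ℝ (Fin d)).isUnitSMul fun _ => Real.two_pi_pos.ne'.isUnit

/-- The period lattice `(2πℤ)^d`, so that `𝕋^d` is the quotient `ℝ^d / (2πℤ)^d`. -/
abbrev periodLattice (d : ℕ) : Submodule ℤ (Fin d → ℝ) :=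
  Submodule.span ℤ (Set.range (periodBasis d))

theorem periodBasis_apply (i : Fin d) : periodBasis d i = Pi.single i (2 * Real.pi) := by
  simp [periodBasis, Module.Basis.isUnitSMul_apply, ← Pi.single_smul]

theorem periodBasis_repr_apply (x : Fin d → ℝ) (i : Fin d) :
    (periodBasis d).repr x i = x i / (2 * Real.pi) := by
  simp [periodBasis, Module.Basis.repr_isUnitSMul, Units.smul_def, div_eq_inv_mul]

theorem Periodic2pi.vadd_periodLattice {E : Type*} {F : (Fin d → ℝ) → E} (hF : Periodic2pi F)
    (g : periodLattice d) (x : Fin d → ℝ) : F (g +ᵥ x) = F x := by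
  obtain ⟨g, hg⟩ := g
  suffices Function.Periodic F g from (congrArg F (add_comm g x)).trans (this x)
  induction hg using Submodule.span_induction with
  | mem v hv =>
    obtain ⟨i, rfl⟩ := hv
    exact fun x => by rw [periodBasis_apply, hF]
  | zero => exact fun x => by rw [add_zero]
  | add v w _ _ hv hw => exact hv.add_period hw
  | smul n v _ hv => exact hv.zsmul n

theorem box_eq_Icc (d : ℕ) : box d = Set.Icc (fun _ => -Real.pi) fun _ => Real.pi :=
  Set.pi_univ_Icc _ _

theorem isCompact_box (d : ℕ) : IsCompact (box d) :=
  isCompact_univ_pi fun _ => isCompact_Icc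

theorem volume_real_box_ne_zero (d : ℕ) : volume.real (box d) ≠ 0 := by
  have hbox : box d ∈ nhds (0 : Fin d → ℝ) := set_pi_mem_nhds Set.finite_univ fun _ _ =>
    Icc_mem_nhds (neg_neg_of_pos Real.pi_pos) Real.pi_pos
  exact ENNReal.toReal_ne_zero.2
    ⟨(Measure.measure_pos_of_mem_nhds volume hbox).ne', (isCompact_box d).measure_ne_top⟩

theorem vadd_fundamentalDomain_periodBasis (d : ℕ) :
    ((fun _ => -Real.pi : Fin d → ℝ) +ᵥ ZSpan.fundamentalDomain (periodBasis d)) =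
      Set.univ.pi fun _ => Set.Ico (-Real.pi) Real.pi := by
  ext x
  simp only [Set.mem_vadd_set_iff_neg_vadd_mem, ZSpan.mem_fundamentalDomain,
    periodBasis_repr_apply, Set.mem_univ_pi, Set.mem_Ico, le_div_iff₀ Real.two_pi_pos,
    div_lt_iff₀ Real.two_pi_pos, vadd_eq_add, Pi.add_apply, Pi.neg_apply]
  exact forall_congr' fun i => and_congr (by constructor <;> intro <;> linarith)
    (by constructor <;> intro <;> linarith)

instance vaddInvariantMeasure_periodLattice (d : ℕ) :
    VAddInvariantMeasure (periodLattice d) (Fin d → ℝ) volume :=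
  ⟨fun c s _ => measure_preimage_add volume (c : Fin d → ℝ) s⟩

instance vaddCommClass_periodLattice (d : ℕ) :
    VAddCommClass (Fin d → ℝ) (periodLattice d) (Fin d → ℝ) :=
  ⟨fun m n x => add_left_comm m (n : Fin d → ℝ) x⟩

theorem isAddFundamentalDomain_box (d : ℕ) :
    IsAddFundamentalDomain (periodLattice d) (box d) volume := by
  have hcube := (ZSpan.isAddFundamentalDomain (periodBasis d) volume).vadd_of_comm
    (fun _ => -Real.pi : Fin d → ℝ)
  rw [vadd_fundamentalDomain_periodBasis] at hcube
  refine isAddFundamentalDomain_congr_ae hcube ?_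
  rw [box_eq_Icc]
  exact Measure.univ_pi_Ico_ae_eq_Icc

end FundamentalDomain

section Translation

open scoped Pointwise

variable {d : ℕ} {E : Type*} [NormedAddCommGroup E] {F : (Fin d → ℝ) → E}

theorem setIntegral_box_add [NormedSpace ℝ E] (hF : Periodic2pi F) (a : Fin d → ℝ) :
    ∫ x in box d, F (x + a) = ∫ x in box d, F x := by
  have himage := (measurePreserving_vadd a (volume : Measure (Fin d → ℝ))).setIntegral_image_emb
    (measurableEmbedding_const_vadd a) F (box d)
  rw [(isAddFundamentalDomain_box d).setIntegral_eq ((isAddFundamentalDomain_box d).vadd_of_comm a)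
    hF.vadd_periodLattice, ← Set.image_vadd, himage]
  simp only [vadd_eq_add, add_comm a]

theorem integrableOn_box_add (hF : Periodic2pi F) (hint : IntegrableOn F (box d))
    (a : Fin d → ℝ) : IntegrableOn (fun x => F (x + a)) (box d) := by
  have hint_vadd := ((isAddFundamentalDomain_box d).integrableOn_iff
    ((isAddFundamentalDomain_box d).vadd_of_comm a) hF.vadd_periodLattice).1 hint
  have hcomp := ((measurePreserving_vadd a (volume : Measure (Fin d → ℝ))).integrableOn_image
    (measurableEmbedding_const_vadd a)).1 hint_vadd
  simpa only [Function.comp_def, vadd_eq_add, add_comm a] using hcomp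

theorem aestronglyMeasurable_of_box (hF : Periodic2pi F)
    (hmeas : AEStronglyMeasurable F (volume.restrict (box d))) :
    AEStronglyMeasurable F volume := by
  have hbox := isAddFundamentalDomain_box d
  rw [← hbox.sum_restrict, aestronglyMeasurable_sum_measure_iff]
  exact fun g => (hbox.aestronglyMeasurable_on_iff (hbox.vadd g) hF.vadd_periodLattice).1 hmeas

theorem integrable_prod_box_add (hF : Periodic2pi F) (hint : IntegrableOn F (box d))
    {Z : Type*} [MeasurableSpace Z] (ν : Measure Z) [IsFiniteMeasure ν] {a : Z → Fin d → ℝ}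
    (ha : Measurable a) :
    Integrable (fun p : (Fin d → ℝ) × Z => F (p.1 + a p.2))
      ((volume.restrict (box d)).prod ν) := by
  have hshift : Measure.QuasiMeasurePreserving (fun p : (Fin d → ℝ) × Z => p.1 + a p.2)
      (volume.prod ν) volume :=
    QuasiMeasurePreserving.prod_of_left (by fun_prop) (.of_forall fun z =>
      (measurePreserving_add_right volume (a z)).quasiMeasurePreserving)
  have hmeas : AEStronglyMeasurable (fun p : (Fin d → ℝ) × Z => F (p.1 + a p.2))
      ((volume.restrict (box d)).prod ν) :=
    ((aestronglyMeasurable_of_box hF hint.aestronglyMeasurable).comp_quasiMeasurePreserving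
      hshift).mono_ac (Measure.restrict_le_self.absolutelyContinuous.prod .rfl)
  have hnorm : Periodic2pi fun x => ‖F x‖ := fun x i => congrArg norm (hF x i)
  refine (integrable_prod_iff' hmeas).2 ⟨.of_forall fun z => integrableOn_box_add hF hint (a z), ?_⟩
  simp only [setIntegral_box_add hnorm]
  exact integrable_const _

end Translation

section ParametricIntegral

universe u v w

variable {X : Type u} {Z : Type v} [NormedAddCommGroup X] [NormedSpace ℝ X]
  [LocallyCompactSpace X] [NormedAddCommGroup Z] [NormedSpace ℝ Z] [SecondCountableTopology Z]
  [MeasurableSpace Z] [OpensMeasurableSpace Z] {ν : Measure Z} [IsLocallyFiniteMeasure ν]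
  {K : Set Z}

theorem hasFDerivAt_setIntegral {V : Type w} [NormedAddCommGroup V] [NormedSpace ℝ V]
    (hK : IsCompact K) {Φ : X × Z → V} (hΦ : ContDiff ℝ 1 Φ) {x : X}
    {Φ' : Z → X →L[ℝ] V} (hΦ' : ∀ z, HasFDerivAt (fun y => Φ (y, z)) (Φ' z) x) :
    HasFDerivAt (fun y => ∫ z in K, Φ (y, z) ∂ν) (∫ z in K, Φ' z ∂ν) x := by
  have hΦ_cont := hΦ.continuous
  have hslice : ∀ z y, HasFDerivAt (fun y => Φ (y, z))
      ((fderiv ℝ Φ (y, z)).comp (.inl ℝ X Z)) y := fun z y =>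
    (hΦ.differentiable one_ne_zero (y, z)).hasFDerivAt.comp y (hasFDerivAt_prodMk_left y z)
  obtain rfl : Φ' = fun z => (fderiv ℝ Φ (x, z)).comp (.inl ℝ X Z) :=
    funext fun z => (hΦ' z).unique (hslice z x)
  have hderiv_cont : Continuous fun p => (fderiv ℝ Φ p).comp (.inl ℝ X Z) :=
    (hΦ.continuous_fderiv one_ne_zero).clm_comp continuous_const
  obtain ⟨U, hU, hxU⟩ := exists_compact_mem_nhds x
  obtain ⟨C, hC⟩ := (hU.prod hK).exists_bound_of_continuousOn hderiv_cont.continuousOn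
  refine hasFDerivAt_integral_of_dominated_of_fderiv_le
    (F' := fun x z => (fderiv ℝ Φ (x, z)).comp (.inl ℝ X Z)) (bound := fun _ => C) hxU
    (.of_forall fun y => ?_) ?_ ?_ ?_ ?_ (.of_forall fun z y _ => hslice z y)
  · exact Continuous.aestronglyMeasurable (by fun_prop)
  · exact ContinuousOn.integrableOn_compact' hK hK.measurableSet (by fun_prop)
  · exact (hderiv_cont.comp (.prodMk_right x)).aestronglyMeasurable
  · exact ae_restrict_of_forall_mem hK.measurableSet fun z hz y hy => hC (y, z) ⟨hy, hz⟩
  · exact integrableOn_const hK.measure_ne_top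

-- The induction replaces `V` by `X →L[ℝ] V`, so `X` and `V` share a universe.
theorem contDiff_setIntegral {V : Type u} [NormedAddCommGroup V] [NormedSpace ℝ V]
    (hK : IsCompact K) {n : ℕ∞} {Φ : X × Z → V} (hΦ : ContDiff ℝ n Φ) :
    ContDiff ℝ n fun x => ∫ z in K, Φ (x, z) ∂ν := by
  suffices ∀ m : ℕ, ∀ {W : Type u} [NormedAddCommGroup W] [NormedSpace ℝ W] {Ψ : X × Z → W},
      ContDiff ℝ m Ψ → ContDiff ℝ m fun x => ∫ z in K, Ψ (x, z) ∂ν from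
    contDiff_iff_forall_nat_le.2 fun m hm => this m (hΦ.of_le (by exact_mod_cast hm))
  intro m
  induction m with
  | zero =>
    intro W _ _ Ψ hΨ
    exact contDiff_zero.2
      (continuous_parametric_integral_of_continuous (f := fun x z => Ψ (x, z)) hΨ.continuous hK)
  | succ m ih =>
    intro W _ _ Ψ hΨ
    have hΨ_one : ContDiff ℝ 1 Ψ := hΨ.of_le (by exact_mod_cast Nat.le_add_left 1 m)
    exact contDiff_succ_iff_hasFDerivAt.2
      ⟨_, ih ((hΨ.fderiv_right le_rfl).clm_comp contDiff_const), fun x =>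
        hasFDerivAt_setIntegral hK hΨ_one fun z =>
          (hΨ_one.differentiable one_ne_zero (x, z)).hasFDerivAt.comp x
            (hasFDerivAt_prodMk_left x z)⟩

end ParametricIntegral

section PeriodicDerivative

variable {d : ℕ} {E : Type*} [NormedAddCommGroup E] [NormedSpace ℝ E]

theorem Periodic2pi.pd {F : (Fin d → ℝ) → E} (hF : Periodic2pi F) (i : Fin d) :
    Periodic2pi (pd i F) := fun x j => by
  simp only [_root_.pd, ← fderiv_comp_add_right, hF _ j]

theorem contDiff_pd {F : (Fin d → ℝ) → E} (hF : ContDiff ℝ (⊤ : ℕ∞) F) (i : Fin d) :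
    ContDiff ℝ (⊤ : ℕ∞) (pd i F) :=
  (hF.fderiv_right (by exact_mod_cast le_top)).clm_apply contDiff_const

theorem setIntegral_box_fderiv_eq_zero {F : (Fin d → ℝ) → E} (hF : Periodic2pi F)
    (hF_diff : ContDiff ℝ 1 F) :
    ∫ x in box d, fderiv ℝ F x = 0 := by
  have hderiv : HasFDerivAt (fun a => ∫ x in box d, F (x + a)) (∫ x in box d, fderiv ℝ F x) 0 :=
    hasFDerivAt_setIntegral (isCompact_box d) (Φ := fun p => F (p.2 + p.1))
      (hF_diff.comp (contDiff_snd.add contDiff_fst)) fun x => by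
        simpa using (hasFDerivAt_comp_add_left (f := F) (x := 0) x).2 (by
          simpa using (hF_diff.differentiable one_ne_zero x).hasFDerivAt)
  simp only [setIntegral_box_add hF] at hderiv
  exact hderiv.unique (hasFDerivAt_const _ _)

theorem setIntegral_box_pd_eq_zero {F : (Fin d → ℝ) → E} (hF : Periodic2pi F)
    (hF_diff : ContDiff ℝ 1 F) (i : Fin d) :
    ∫ x in box d, pd i F x = 0 := by
  have hint : IntegrableOn (fderiv ℝ F) (box d) :=
    (hF_diff.continuous_fderiv one_ne_zero).continuousOn.integrableOn_compact (isCompact_box d)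
  simp only [pd, ← ContinuousLinearMap.integral_apply hint,
    setIntegral_box_fderiv_eq_zero hF hF_diff, zero_apply]

end PeriodicDerivative

section Divergence

variable {d : ℕ}

/-- The divergence `∇·φ` of a vector field on `ℝ^d`. -/
def divergence (φ : (Fin d → ℝ) → EuclideanSpace ℝ (Fin d)) (x : Fin d → ℝ) : ℝ :=
  ∑ i, pd i φ x i

/-- Smooth divergence-free vector fields on the torus, seen as periodic fields on `ℝ^d`. -/
structure IsSolenoidal (φ : (Fin d → ℝ) → EuclideanSpace ℝ (Fin d)) : Prop where
  contDiff : ContDiff ℝ (⊤ : ℕ∞) φ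
  periodic : Periodic2pi φ
  divergence_eq_zero : ∀ x, divergence φ x = 0

/-- The trace of a Jacobian. The domain carries the sup norm and the codomain the Euclidean norm,
so this is not the trace of an endomorphism. -/
def jacobianTrace (d : ℕ) : ((Fin d → ℝ) →L[ℝ] EuclideanSpace ℝ (Fin d)) →L[ℝ] ℝ :=
  ∑ i, (EuclideanSpace.proj i).comp (ContinuousLinearMap.apply ℝ _ (Pi.single i 1))

theorem jacobianTrace_apply (A : (Fin d → ℝ) →L[ℝ] EuclideanSpace ℝ (Fin d)) :
    jacobianTrace d A = ∑ i, A (Pi.single i 1) i := by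
  simp [jacobianTrace]

theorem jacobianTrace_smulRight (L : (Fin d → ℝ) →L[ℝ] ℝ) (v : EuclideanSpace ℝ (Fin d)) :
    jacobianTrace d (L.smulRight v) = L v := by
  conv_rhs => rw [← Finset.univ_sum_single (v : Fin d → ℝ)]
  simp only [jacobianTrace_apply, ContinuousLinearMap.smulRight_apply, PiLp.smul_apply,
    map_sum, smul_eq_mul]
  refine Finset.sum_congr rfl fun i _ => ?_
  rw [mul_comm, ← smul_eq_mul, ← map_smul, ← Pi.single_smul, smul_eq_mul, mul_one]

theorem divergence_eq_of_hasFDerivAt {φ : (Fin d → ℝ) → EuclideanSpace ℝ (Fin d)} {x : Fin d → ℝ}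
    {A : (Fin d → ℝ) →L[ℝ] EuclideanSpace ℝ (Fin d)} (hφ : HasFDerivAt φ A x) :
    divergence φ x = jacobianTrace d A := by
  simp only [divergence, pd, hφ.fderiv, jacobianTrace_apply]

theorem divergence_add {φ η : (Fin d → ℝ) → EuclideanSpace ℝ (Fin d)} {x : Fin d → ℝ}
    (hφ : DifferentiableAt ℝ φ x) (hη : DifferentiableAt ℝ η x) :
    divergence (φ + η) x = divergence φ x + divergence η x := by
  rw [divergence_eq_of_hasFDerivAt (hφ.hasFDerivAt.add hη.hasFDerivAt), map_add,
    ← divergence_eq_of_hasFDerivAt hφ.hasFDerivAt, ← divergence_eq_of_hasFDerivAt hη.hasFDerivAt]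

theorem divergence_smul_const {ψ : (Fin d → ℝ) → ℝ} {x : Fin d → ℝ}
    (hψ : DifferentiableAt ℝ ψ x) (v : EuclideanSpace ℝ (Fin d)) :
    divergence (fun y => ψ y • v) x = fderiv ℝ ψ x v := by
  rw [divergence_eq_of_hasFDerivAt (hψ.hasFDerivAt.smul_const v), jacobianTrace_smulRight]

theorem IsSolenoidal.sub_const {φ : (Fin d → ℝ) → EuclideanSpace ℝ (Fin d)}
    (hφ : IsSolenoidal φ) (v : EuclideanSpace ℝ (Fin d)) : IsSolenoidal fun x => φ x - v where
  contDiff := hφ.contDiff.sub contDiff_const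
  periodic x i := congrArg (· - v) (hφ.periodic x i)
  divergence_eq_zero x := by
    simpa only [divergence, pd, fderiv_sub_const] using hφ.divergence_eq_zero x

end Divergence

section Segment

theorem integral_fderiv_segment {X E : Type*} [NormedAddCommGroup X] [NormedSpace ℝ X]
    [NormedAddCommGroup E] [NormedSpace ℝ E] [CompleteSpace E] {χ : X → E}
    (hχ : ContDiff ℝ 1 χ) (x y : X) :
    ∫ t in Set.Icc (0 : ℝ) 1, fderiv ℝ χ (x + t • y) y = χ (x + y) - χ x := by
  have hderiv : ∀ t ∈ Set.uIcc (0 : ℝ) 1,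
      HasDerivAt (fun t => χ (x + t • y)) (fderiv ℝ χ (x + t • y) y) t := fun t _ => by
    simpa only [one_smul, Function.comp_def] using
      (hχ.differentiable one_ne_zero _).hasFDerivAt.comp_hasDerivAt t
        (((hasDerivAt_id' t).smul_const y).const_add x)
  have hcont : Continuous fun t : ℝ => fderiv ℝ χ (x + t • y) y :=
    ((hχ.continuous_fderiv one_ne_zero).comp (by fun_prop)).clm_apply continuous_const
  rw [integral_Icc_eq_integral_Ioc, ← intervalIntegral.integral_of_le zero_le_one,
    intervalIntegral.integral_eq_sub_of_hasDerivAt hderiv (hcont.intervalIntegrable 0 1),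
    one_smul, zero_smul, add_zero]

variable {d : ℕ}

/-- The parameters `(y, t)` of a point `t y` of the segment from `0` to a point `y` of the box. -/
def segmentDomain (d : ℕ) : Set ((Fin d → ℝ) × ℝ) := box d ×ˢ Set.Icc 0 1

/-- The field `χ ↦ ⨍_y ∫_0^1 χ(x + t y) y dt dy`, with `y` averaged over the box. On mean-zero
functions it is a right inverse of `-div`. -/
def segmentField (χ : (Fin d → ℝ) → ℝ) (x : Fin d → ℝ) : EuclideanSpace ℝ (Fin d) :=
  (volume.real (box d))⁻¹ • ∫ z in segmentDomain d, χ (x + z.2 • z.1) • WithLp.toLp 2 z.1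

/-- The line integral of `f` along the segment from `x - y` to `x`, averaged over all `y` in the
box. -/
def linePotential (f : (Fin d → ℝ) → EuclideanSpace ℝ (Fin d)) (x : Fin d → ℝ) : ℝ :=
  (volume.real (box d))⁻¹ * ∫ z in segmentDomain d, ⟪f (x - z.2 • z.1), WithLp.toLp 2 z.1⟫_ℝ

theorem isCompact_segmentDomain (d : ℕ) : IsCompact (segmentDomain d) :=
  (isCompact_box d).prod isCompact_Icc

theorem contDiff_segmentIntegrand {χ : (Fin d → ℝ) → ℝ} {n : ℕ∞} (hχ : ContDiff ℝ n χ) :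
    ContDiff ℝ n fun p : (Fin d → ℝ) × ((Fin d → ℝ) × ℝ) =>
      χ (p.1 + p.2.2 • p.2.1) • (WithLp.toLp 2 p.2.1 : EuclideanSpace ℝ (Fin d)) :=
  (hχ.comp (by fun_prop)).smul (PiLp.contDiff_toLp.comp (by fun_prop))

theorem contDiff_segmentField {χ : (Fin d → ℝ) → ℝ} {n : ℕ∞} (hχ : ContDiff ℝ n χ) :
    ContDiff ℝ n (segmentField χ) :=
  (contDiff_setIntegral (isCompact_segmentDomain d) (contDiff_segmentIntegrand hχ)).const_smul _

theorem hasFDerivAt_segmentField {χ : (Fin d → ℝ) → ℝ} (hχ : ContDiff ℝ 1 χ) (x : Fin d → ℝ) :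
    HasFDerivAt (segmentField χ) ((volume.real (box d))⁻¹ • ∫ z in segmentDomain d,
      (fderiv ℝ χ (x + z.2 • z.1)).smulRight (WithLp.toLp 2 z.1)) x := by
  have hslice (z : (Fin d → ℝ) × ℝ) : HasFDerivAt
      (fun y => χ (y + z.2 • z.1) • (WithLp.toLp 2 z.1 : EuclideanSpace ℝ (Fin d)))
      ((fderiv ℝ χ (x + z.2 • z.1)).smulRight (WithLp.toLp 2 z.1)) x :=
    ((hasFDerivAt_comp_add_right (z.2 • z.1)).2
      (hχ.differentiable one_ne_zero _).hasFDerivAt).smul_const _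
  exact (hasFDerivAt_setIntegral (isCompact_segmentDomain d) (contDiff_segmentIntegrand hχ)
    hslice).const_smul (volume.real (box d))⁻¹

theorem Periodic2pi.segmentField {χ : (Fin d → ℝ) → ℝ} (hχ : Periodic2pi χ) :
    Periodic2pi (segmentField χ) := fun x i => by
  have hχ_add (a : Fin d → ℝ) : χ (x + Pi.single i (2 * Real.pi) + a) = χ (x + a) := by
    rw [add_right_comm, hχ]
  simp only [_root_.segmentField, hχ_add]

theorem Periodic2pi.linePotential {f : (Fin d → ℝ) → EuclideanSpace ℝ (Fin d)}
    (hf : Periodic2pi f) : Periodic2pi (linePotential f) := fun x i => by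
  simp only [_root_.linePotential, add_sub_right_comm x, hf _ i]

theorem divergence_segmentField {χ : (Fin d → ℝ) → ℝ} (hχ_per : Periodic2pi χ)
    (hχ : ContDiff ℝ 1 χ) (x : Fin d → ℝ) :
    divergence (segmentField χ) x = (⨍ y in box d, χ y) - χ x := by
  have hint : IntegrableOn (fun z : (Fin d → ℝ) × ℝ => (fderiv ℝ χ (x + z.2 • z.1)).smulRight
      (WithLp.toLp 2 z.1 : EuclideanSpace ℝ (Fin d))) (segmentDomain d) := by
    refine ContinuousOn.integrableOn_compact (isCompact_segmentDomain d) ?_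
    change ContinuousOn (fun z : (Fin d → ℝ) × ℝ => ContinuousLinearMap.smulRightL ℝ _ _
      (fderiv ℝ χ (x + z.2 • z.1)) (WithLp.toLp 2 z.1)) _
    fun_prop
  have hint_apply : IntegrableOn (fun z : (Fin d → ℝ) × ℝ => fderiv ℝ χ (x + z.2 • z.1) z.1)
      (segmentDomain d) :=
    ContinuousOn.integrableOn_compact (isCompact_segmentDomain d) (by fun_prop)
  have hχ_int : IntegrableOn χ (box d) :=
    hχ.continuous.continuousOn.integrableOn_compact (isCompact_box d)
  calc divergence (segmentField χ) x
      = (volume.real (box d))⁻¹ * ∫ z in segmentDomain d, fderiv ℝ χ (x + z.2 • z.1) z.1 := by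
        rw [divergence_eq_of_hasFDerivAt (hasFDerivAt_segmentField hχ x), map_smul, smul_eq_mul,
          ← ContinuousLinearMap.integral_comp_comm _ hint]
        simp only [jacobianTrace_smulRight]
    _ = (volume.real (box d))⁻¹ * ∫ y in box d, (χ (y + x) - χ x) := by
        rw [segmentDomain, Measure.volume_eq_prod, setIntegral_prod _ hint_apply]
        simp_rw [integral_fderiv_segment hχ, add_comm x]
    _ = (⨍ y in box d, χ y) - χ x := by
        rw [integral_sub (integrableOn_box_add hχ_per hχ_int x) (integrableOn_const
          (isCompact_box d).measure_ne_top), setIntegral_box_add hχ_per, setIntegral_const,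
          setAverage_eq, smul_eq_mul, smul_eq_mul, mul_sub,
          inv_mul_cancel_left₀ (volume_real_box_ne_zero d)]

end Segment

section Duality

theorem integrableOn_inner_of_continuousOn {X E : Type*} [TopologicalSpace X] [T2Space X]
    [MeasurableSpace X] [OpensMeasurableSpace X] [NormedAddCommGroup E] [InnerProductSpace ℝ E]
    {μ : Measure X} {K : Set X} (hK : IsCompact K) {f g : X → E} (hf : IntegrableOn f K μ)
    (hg : ContinuousOn g K) : IntegrableOn (fun x => ⟪f x, g x⟫_ℝ) K μ := by
  obtain ⟨C, hC⟩ := hK.exists_bound_of_continuousOn hg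
  refine (hf.norm.mul_const C).mono' (hf.aestronglyMeasurable.inner
    (hg.aestronglyMeasurable_of_isCompact hK hK.measurableSet)) ?_
  exact ae_restrict_of_forall_mem hK.measurableSet fun x hx =>
    (norm_inner_le_norm _ _).trans (by gcongr; exact hC x hx)

variable {d : ℕ} {f : (Fin d → ℝ) → EuclideanSpace ℝ (Fin d)}

theorem integrable_prod_inner_box_add (hf : Periodic2pi f) (hfint : IntegrableOn f (box d))
    {Z : Type*} [TopologicalSpace Z] [T2Space Z] [SecondCountableTopology Z] [MeasurableSpace Z]
    [OpensMeasurableSpace Z] {ν : Measure Z} [SFinite ν] [IsFiniteMeasureOnCompacts ν]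
    {K : Set Z} (hK : IsCompact K) {a : Z → Fin d → ℝ} (ha : Continuous a)
    {c : (Fin d → ℝ) × Z → EuclideanSpace ℝ (Fin d)} (hc : Continuous c) :
    Integrable (fun p : (Fin d → ℝ) × Z => ⟪f (p.1 + a p.2), c p⟫_ℝ)
      ((volume.restrict (box d)).prod (ν.restrict K)) := by
  have : IsFiniteMeasure (ν.restrict K) := isFiniteMeasure_restrict.2 hK.measure_ne_top
  have hshift := integrable_prod_box_add hf hfint (ν.restrict K) ha.measurable
  rw [Measure.prod_restrict] at hshift ⊢
  exact integrableOn_inner_of_continuousOn ((isCompact_box d).prod hK) hshift hc.continuousOn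

theorem integrable_prod_segmentField (hf : Periodic2pi f) (hfint : IntegrableOn f (box d))
    {χ : (Fin d → ℝ) → ℝ} (hχ : Continuous χ) :
    Integrable (fun p : (Fin d → ℝ) × ((Fin d → ℝ) × ℝ) =>
        ⟪f p.1, χ (p.1 + p.2.2 • p.2.1) • WithLp.toLp 2 p.2.1⟫_ℝ)
      ((volume.restrict (box d)).prod (volume.restrict (segmentDomain d))) := by
  simpa only [Pi.zero_apply, add_zero] using
    integrable_prod_inner_box_add hf hfint (isCompact_segmentDomain d) (ν := volume) (a := 0)
      continuous_const (c := fun p => χ (p.1 + p.2.2 • p.2.1) • WithLp.toLp 2 p.2.1)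
      (by fun_prop)

theorem integrable_prod_linePotential (hf : Periodic2pi f) (hfint : IntegrableOn f (box d))
    {χ : (Fin d → ℝ) → ℝ} (hχ : Continuous χ) :
    Integrable (fun p : (Fin d → ℝ) × ((Fin d → ℝ) × ℝ) =>
        ⟪f (p.1 - p.2.2 • p.2.1), χ p.1 • WithLp.toLp 2 p.2.1⟫_ℝ)
      ((volume.restrict (box d)).prod (volume.restrict (segmentDomain d))) := by
  simp only [sub_eq_add_neg]
  exact integrable_prod_inner_box_add hf hfint (isCompact_segmentDomain d)
    (a := fun z => -(z.2 • z.1)) (by fun_prop) (by fun_prop)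

theorem integrableOn_linePotential (hf : Periodic2pi f) (hfint : IntegrableOn f (box d)) :
    IntegrableOn (linePotential f) (box d) := by
  refine Integrable.const_mul ?_ _
  simpa only [one_smul] using
    (integrable_prod_linePotential hf hfint (continuous_const (y := 1))).integral_prod_left

theorem setIntegral_inner_segmentField (hf : Periodic2pi f) (hfint : IntegrableOn f (box d))
    {χ : (Fin d → ℝ) → ℝ} (hχ_per : Periodic2pi χ) (hχ : Continuous χ) :
    ∫ x in box d, ⟪f x, segmentField χ x⟫_ℝ = ∫ x in box d, linePotential f x * χ x := by
  have hint_field (x : Fin d → ℝ) : IntegrableOn (fun z : (Fin d → ℝ) × ℝ =>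
      χ (x + z.2 • z.1) • (WithLp.toLp 2 z.1 : EuclideanSpace ℝ (Fin d))) (segmentDomain d) :=
    ContinuousOn.integrableOn_compact (isCompact_segmentDomain d) (by fun_prop)
  have htranslate (z : (Fin d → ℝ) × ℝ) :
      ∫ x in box d, ⟪f x, χ (x + z.2 • z.1) • WithLp.toLp 2 z.1⟫_ℝ =
        ∫ x in box d, ⟪f (x - z.2 • z.1), χ x • WithLp.toLp 2 z.1⟫_ℝ := by
    have hper : Periodic2pi fun x => ⟪f (x - z.2 • z.1), χ x • WithLp.toLp 2 z.1⟫_ℝ := fun x i => by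
      simp only [add_sub_right_comm x, hf _ i, hχ_per x i]
    simpa only [add_sub_cancel_right] using setIntegral_box_add hper (z.2 • z.1)
  calc ∫ x in box d, ⟪f x, segmentField χ x⟫_ℝ
      = (volume.real (box d))⁻¹ * ∫ x in box d, ∫ z in segmentDomain d,
          ⟪f x, χ (x + z.2 • z.1) • WithLp.toLp 2 z.1⟫_ℝ := by
        rw [← integral_const_mul]
        congr with x
        rw [segmentField, real_inner_smul_right, integral_inner (hint_field x)]
    _ = (volume.real (box d))⁻¹ * ∫ z in segmentDomain d, ∫ x in box d,
          ⟪f (x - z.2 • z.1), χ x • WithLp.toLp 2 z.1⟫_ℝ := by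
        rw [integral_integral_swap (integrable_prod_segmentField hf hfint hχ)]
        simp only [htranslate]
    _ = (volume.real (box d))⁻¹ * ∫ x in box d, ∫ z in segmentDomain d,
          ⟪f (x - z.2 • z.1), χ x • WithLp.toLp 2 z.1⟫_ℝ :=
        congrArg _ (integral_integral_swap (integrable_prod_linePotential hf hfint hχ)).symm
    _ = ∫ x in box d, linePotential f x * χ x := by
        rw [← integral_const_mul]
        congr with x
        simp only [linePotential, inner_smul_right, integral_const_mul]
        ring

end Duality

section Representation

variable {d : ℕ} {f : (Fin d → ℝ) → EuclideanSpace ℝ (Fin d)}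

theorem setIntegral_inner_eq_zero_of_forall_mean_zero (hfint : IntegrableOn f (box d))
    (hfmean : ∫ x in box d, f x = 0)
    (horth : ∀ φ, IsSolenoidal φ → ∫ x in box d, φ x = 0 → ∫ x in box d, ⟪f x, φ x⟫_ℝ = 0)
    {φ : (Fin d → ℝ) → EuclideanSpace ℝ (Fin d)} (hφ : IsSolenoidal φ) :
    ∫ x in box d, ⟪f x, φ x⟫_ℝ = 0 := by
  have : IsFiniteMeasure (volume.restrict (box d)) :=
    isFiniteMeasure_restrict.2 (isCompact_box d).measure_ne_top
  set m := ⨍ x in box d, φ x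
  have hinner_mean : ∫ x in box d, ⟪f x, m⟫_ℝ = 0 := by
    simp only [real_inner_comm m, integral_inner hfint, hfmean, inner_zero_right]
  have hsub := horth _ (hφ.sub_const m) (integral_sub_average _ φ)
  simp only [inner_sub_right] at hsub
  rwa [integral_sub (integrableOn_inner_of_continuousOn (isCompact_box d) hfint
    hφ.contDiff.continuous.continuousOn) (hfint.inner_const m), hinner_mean, sub_zero] at hsub

/-- The field `ψ eᵢ`, made divergence-free by adding a right inverse of `-div` applied to its
divergence `∂ᵢψ`. -/
def solenoidalCorrection (ψ : (Fin d → ℝ) → ℝ) (i : Fin d) (x : Fin d → ℝ) :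
    EuclideanSpace ℝ (Fin d) :=
  ψ x • EuclideanSpace.single i 1 + segmentField (pd i ψ) x

theorem isSolenoidal_solenoidalCorrection {ψ : (Fin d → ℝ) → ℝ}
    (hψ : ContDiff ℝ (⊤ : ℕ∞) ψ) (hψ_per : Periodic2pi ψ) (i : Fin d) :
    IsSolenoidal (solenoidalCorrection ψ i) where
  contDiff := (hψ.smul contDiff_const).add (contDiff_segmentField (contDiff_pd hψ i))
  periodic x j := by
    simp only [solenoidalCorrection, hψ_per x j, (hψ_per.pd i).segmentField x j]
  divergence_eq_zero x := by
    have hψ_one : ContDiff ℝ 1 ψ := hψ.of_le (by exact_mod_cast le_top)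
    have hpd_one : ContDiff ℝ 1 (pd i ψ) :=
      (contDiff_pd hψ i).of_le (by exact_mod_cast le_top)
    have hψ_diff : DifferentiableAt ℝ ψ x := hψ_one.differentiable one_ne_zero x
    have hfield_diff : DifferentiableAt ℝ (segmentField (pd i ψ)) x :=
      (contDiff_segmentField hpd_one).differentiable one_ne_zero x
    change divergence ((fun y => ψ y • EuclideanSpace.single i 1) + segmentField (pd i ψ)) x = 0
    rw [divergence_add (hψ_diff.smul_const _) hfield_diff, divergence_smul_const hψ_diff,
      divergence_segmentField (hψ_per.pd i) hpd_one, setAverage_eq,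
      setIntegral_box_pd_eq_zero hψ_per hψ_one, smul_zero, zero_sub]
    exact add_neg_cancel (pd i ψ x)

theorem setIntegral_apply_mul_eq_neg_linePotential (hf : Periodic2pi f)
    (hfint : IntegrableOn f (box d))
    (horth : ∀ φ, IsSolenoidal φ → ∫ x in box d, ⟪f x, φ x⟫_ℝ = 0)
    {ψ : (Fin d → ℝ) → ℝ} (hψ : ContDiff ℝ (⊤ : ℕ∞) ψ) (hψ_per : Periodic2pi ψ) (i : Fin d) :
    ∫ x in box d, f x i * ψ x = -∫ x in box d, linePotential f x * pd i ψ x := by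
  have hpd := contDiff_pd hψ i
  have hint {η : (Fin d → ℝ) → EuclideanSpace ℝ (Fin d)} (hη : Continuous η) :
      IntegrableOn (fun x => ⟪f x, η x⟫_ℝ) (box d) :=
    integrableOn_inner_of_continuousOn (isCompact_box d) hfint hη.continuousOn
  rw [eq_neg_iff_add_eq_zero]
  calc (∫ x in box d, f x i * ψ x) + ∫ x in box d, linePotential f x * pd i ψ x
      = (∫ x in box d, ⟪f x, ψ x • EuclideanSpace.single i 1⟫_ℝ) +
          ∫ x in box d, ⟪f x, segmentField (pd i ψ) x⟫_ℝ := by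
        simp [setIntegral_inner_segmentField hf hfint (hψ_per.pd i) hpd.continuous,
          inner_smul_right, EuclideanSpace.inner_single_right, mul_comm (ψ _)]
    _ = ∫ x in box d, ⟪f x, solenoidalCorrection ψ i x⟫_ℝ := by
        simp only [solenoidalCorrection, inner_add_right]
        exact (integral_add (hint (hψ.continuous.smul continuous_const))
          (hint (contDiff_segmentField hpd).continuous)).symm
    _ = 0 := horth _ (isSolenoidal_solenoidalCorrection hψ hψ_per i)

end Representation

theorem gradient_representation_general {d : ℕ} {f : (Fin d → ℝ) → EuclideanSpace ℝ (Fin d)}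
    (hfper : Periodic2pi f) (hfint : IntegrableOn f (box d)) (hfmean : ∫ x in box d, f x = 0)
    (horth : ∀ φ, IsSolenoidal φ → ∫ x in box d, φ x = 0 → ∫ x in box d, ⟪f x, φ x⟫_ℝ = 0) :
    Periodic2pi (linePotential f) ∧ IntegrableOn (linePotential f) (box d) ∧
      ∀ ψ : (Fin d → ℝ) → ℝ, ContDiff ℝ (⊤ : ℕ∞) ψ → Periodic2pi ψ →
        ∀ i, ∫ x in box d, f x i * ψ x = -∫ x in box d, linePotential f x * pd i ψ x :=
  ⟨hfper.linePotential, integrableOn_linePotential hfper hfint, fun _ hψ hψ_per i =>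
    setIntegral_apply_mul_eq_neg_linePotential hfper hfint
      (fun _ => setIntegral_inner_eq_zero_of_forall_mean_zero hfint hfmean horth) hψ hψ_per i⟩

/-- if `f ∈ L¹(𝕋^d)` has mean zero and is orthogonal to every smooth
divergence-free mean-zero vector field, then `f = ∇p` (in the weak sense) for some
`p ∈ W^{1,1}(𝕋^d)` (`p ∈ L¹` and its weak gradient is `f ∈ L¹`). -/
theorem gradient_representation (d : ℕ) (hd : 2 ≤ d)
    (f : (Fin d → ℝ) → EuclideanSpace ℝ (Fin d))
    (hfper : Periodic2pi f) (hfint : IntegrableOn f (box d))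
    (hfmean : (∫ x in box d, f x) = 0)
    (horth : ∀ φ : (Fin d → ℝ) → EuclideanSpace ℝ (Fin d),
      ContDiff ℝ (⊤ : ℕ∞) φ → Periodic2pi φ →
      (∀ x, ∑ i, pd i φ x i = 0) →
      (∫ x in box d, φ x) = 0 →
      (∫ x in box d, ⟪f x, φ x⟫_ℝ) = 0) :
    ∃ p : (Fin d → ℝ) → ℝ, Periodic2pi p ∧ IntegrableOn p (box d) ∧
      ∀ ψ : (Fin d → ℝ) → ℝ, ContDiff ℝ (⊤ : ℕ∞) ψ → Periodic2pi ψ →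
        ∀ i, (∫ x in box d, f x i * ψ x) = -∫ x in box d, p x * pd i ψ x :=
  ⟨_, gradient_representation_general hfper hfint hfmean fun φ hφ =>
    horth φ hφ.contDiff hφ.periodic hφ.divergence_eq_zero⟩

end
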